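/- arXiv:2307.07271 — 2 statements merged into one kernel-verified Lean document; each statement's English description precedes it below -/
import Mathlib

section
/- Let τ > 2 and A > 0, and let d = (d_i)_{i∈[n]} be a sequence of positive integers with average d̄ = (1/n)·Σ_i d_i such that (1/n)·|{i : d_i ≥ k}| ≤ A·d̄^{τ−1}·k^{1−τ} for every positive integer k. Then for every positive integer k, Σ_{i : d_i ≥ k} d_i ≤ (1 + 1/(τ−2))·A·d̄^{τ−1}·k^{2−τ}·n. -/
open Finset

/-!
Write `N j` for the number of entries that are at least `j`. Splitting each entry `d i ≥ k` as
`k + (d i - k)` gives `∑_{d i ≥ k} d i = k * N k + W k`, where `W k = ∑ i, (d i - k)⁺` is the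
excess over `k`, and `W k = N (k + 1) + W (k + 1)`. The tail hypothesis bounds `k * N k` by
`C k ^ (2 - τ) n` with `C = A dbar ^ (τ - 1)`. Since `W` vanishes beyond the largest entry,
descending the recursion from there bounds `W k` by `C n ∑_{j > k} j ^ (1 - τ)`, which is compared
with the integral of `x ^ (1 - τ)` over `[k, ∞)`, namely `k ^ (2 - τ) / (τ - 2)`. The comparison is
made one step at a time: `rpow_step` bounds each summand by a telescoping difference.
-/

/-- One step of the comparison of `∑ j ^ (-1 - s)` with the integral of `x ^ (-1 - s)`. -/
lemma rpow_step (s x : ℝ) (hs : 0 < s) (hx : 0 < x) :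
    (x + 1) ^ (-1 - s) + (x + 1) ^ (-s) / s ≤ x ^ (-s) / s := by
  have hx1 : 0 < x + 1 := by linarith
  -- Bernoulli's inequality in the form `(x / (x + 1)) ^ (-s) ≥ 1 + s / (x + 1)`, valid for
  -- every `s > 0`, from `exp t ≥ 1 + t` and `log y ≤ y - 1`.
  have hB : 1 + s / (x + 1) ≤ (x / (x + 1)) ^ (-s) := by
    have hy : 0 < x / (x + 1) := by positivity
    have h1 := Real.log_le_sub_one_of_pos hy
    have h2 := Real.add_one_le_exp (Real.log (x / (x + 1)) * (-s))
    rw [Real.rpow_def_of_pos hy]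
    have h3 : s / (x + 1) = (x / (x + 1) - 1) * (-s) := by field_simp; ring
    nlinarith
  have hp : 0 < (x + 1) ^ (-s) := Real.rpow_pos_of_pos hx1 _
  rw [Real.div_rpow hx.le hx1.le, le_div_iff₀ hp] at hB
  have he : (x + 1) ^ (-1 - s) = (x + 1) ^ (-s) / (x + 1) := by
    rw [show -1 - s = -s - 1 by ring, Real.rpow_sub_one hx1.ne']
  rw [he, le_div_iff₀ hs]
  calc _ = (1 + s / (x + 1)) * (x + 1) ^ (-s) := by field_simp; ring
    _ ≤ _ := hB

/-- The excess over `k` decreases by the number of entries above `k` when `k` increases by one. -/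
lemma excess_succ {n : ℕ} (d : Fin n → ℕ) (k : ℕ) :
    ∑ i, ((d i - k : ℕ) : ℝ) =
      ((univ.filter (fun i => k + 1 ≤ d i)).card : ℝ) + ∑ i, ((d i - (k + 1) : ℕ) : ℝ) := by
  rw [card_filter]
  push_cast
  rw [← sum_add_distrib]
  refine sum_congr rfl fun i _ => ?_
  split_ifs with h
  · rw [show d i - k = 1 + (d i - (k + 1)) by omega]; push_cast; rfl
  · rw [show d i - k = 0 by omega, show d i - (k + 1) = 0 by omega]; simp

/-- The excess over `k` is controlled by the integral of the tail bound. The induction variable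
`m` bounds the distance from `k` to the largest entry. -/
lemma excess_le {n : ℕ} (d : Fin n → ℕ) (s B : ℝ) (hs : 0 < s) (hB : 0 ≤ B)
    (hN : ∀ k : ℕ, 0 < k →
      ((univ.filter (fun i => k ≤ d i)).card : ℝ) ≤ B * (k : ℝ) ^ (-1 - s))
    (m : ℕ) : ∀ k : ℕ, 0 < k → (∀ i, d i ≤ k + m) →
      ∑ i, ((d i - k : ℕ) : ℝ) ≤ B * ((k : ℝ) ^ (-s) / s) := by
  induction m with
  | zero =>
    intro k _ h
    rw [sum_eq_zero fun i _ => by rw [show d i - k = 0 from Nat.sub_eq_zero_of_le (h i)]; simp]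
    positivity
  | succ m ih =>
    intro k hk h
    have h1 := ih (k + 1) (by omega) fun i => by have := h i; omega
    have h2 := hN (k + 1) (by omega)
    have h3 := mul_le_mul_of_nonneg_left (rpow_step s k hs (by exact_mod_cast hk)) hB
    rw [excess_succ]
    push_cast at h1 h2
    rw [mul_add] at h3
    linarith

/-- If a positive integer sequence satisfies a power-law tail bound, then the sum of the
entries of value at least `k` is at most `(1 + 1/(τ−2))·A·dbar^{τ−1}·k^{2−τ}·n`. -/
theorem powerlaw_tail_volume (τ A : ℝ) (hτ : 2 < τ) (hA : 0 < A)
    (n : ℕ) (d : Fin n → ℕ) (hd : ∀ i, 0 < d i)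
    (dbar : ℝ) (hdbar : dbar = (∑ i : Fin n, (d i : ℝ)) / n)
    (hyp : ∀ k : ℕ, 0 < k →
      ((Finset.univ.filter (fun i => k ≤ d i)).card : ℝ) / n
        ≤ A * dbar ^ (τ - 1) * (k : ℝ) ^ (1 - τ)) :
    ∀ k : ℕ, 0 < k →
      ∑ i ∈ Finset.univ.filter (fun i => k ≤ d i), (d i : ℝ)
        ≤ (1 + 1 / (τ - 2)) * A * dbar ^ (τ - 1) * (k : ℝ) ^ (2 - τ) * n := by
  intro k hk
  have hs : 0 < τ - 2 := by linarith
  have hdb : 0 ≤ dbar := by rw [hdbar]; positivity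
  have hB : 0 ≤ A * dbar ^ (τ - 1) * n := by positivity
  have hN : ∀ k : ℕ, 0 < k → ((univ.filter (fun i => k ≤ d i)).card : ℝ)
      ≤ A * dbar ^ (τ - 1) * n * (k : ℝ) ^ (-1 - (τ - 2)) := by
    intro k hk
    -- For `n = 0` the division in `hyp` carries no information, but the count is zero.
    rcases Nat.eq_zero_or_pos n with rfl | hn
    · simp
    · have h := hyp k hk
      rw [div_le_iff₀ (by exact_mod_cast hn)] at h
      rw [show -1 - (τ - 2) = 1 - τ by ring]
      linarith
  have hW := excess_le d (τ - 2) _ hs hB hN (∑ i, d i) k hk fun i =>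
    (single_le_sum (f := d) (fun _ _ => Nat.zero_le _) (mem_univ i)).trans (Nat.le_add_left _ _)
  have hsplit : ∑ i ∈ univ.filter (fun i => k ≤ d i), (d i : ℝ)
      = k * ((univ.filter (fun i => k ≤ d i)).card : ℝ) + ∑ i, ((d i - k : ℕ) : ℝ) := by
    rw [card_filter, sum_filter]
    push_cast
    rw [mul_sum, ← sum_add_distrib]
    refine sum_congr rfl fun i _ => ?_
    split_ifs with h
    · rw [Nat.cast_sub h]; ring
    · rw [show d i - k = 0 by omega]; simp
  have hk0 : (0 : ℝ) < k := by exact_mod_cast hk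
  have hkN := mul_le_mul_of_nonneg_left (hN k hk) hk0.le
  have hpow : (k : ℝ) * (k : ℝ) ^ (-1 - (τ - 2)) = (k : ℝ) ^ (2 - τ) := by
    rw [show -1 - (τ - 2) = (2 - τ) - 1 by ring, Real.rpow_sub_one hk0.ne']
    field_simp
  rw [show -(τ - 2) = 2 - τ by ring] at hW
  rw [hsplit]
  calc _ ≤ k * (A * dbar ^ (τ - 1) * n * (k : ℝ) ^ (-1 - (τ - 2)))
        + A * dbar ^ (τ - 1) * n * ((k : ℝ) ^ (2 - τ) / (τ - 2)) := add_le_add hkN hW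
    _ = A * dbar ^ (τ - 1) * n * (k * (k : ℝ) ^ (-1 - (τ - 2)))
        + A * dbar ^ (τ - 1) * n * ((k : ℝ) ^ (2 - τ) / (τ - 2)) := by ring
    _ = _ := by rw [hpow]; ring
end

section
/- Let m be a positive integer, δ ∈ (−m, m) a real number, and set a = 2 + δ/m. For each integer ℓ ≥ 0 define p_{m+ℓ} = ∫₀¹ (Γ(m+δ+ℓ)/(ℓ!·Γ(m+δ)))·u^{(m+δ)/a}·(1 − u^{1/a})^ℓ du, and set p_k = 0 for k < m. Then Σ_{k=m}^∞ k·p_k = 2m. -/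
/-!
Write `r = m + δ > 0`. For fixed `u ∈ (0, 1]` put `p = u ^ (1 / a) ∈ (0, 1]`. The integrand
defining `p_{m+ℓ}` is the negative binomial weight `Γ(r+ℓ) / (ℓ! Γ(r)) * p ^ r * (1 - p) ^ ℓ`, so
by the binomial series (for the exponents `-r` and `-(r + 1)`) the sum over `ℓ` of `m + ℓ` times
these weights is the shifted negative binomial mean `m + r (1 - p) / p = (m - r) + r u ^ (-1 / a)`.
Since `a = (m + r) / m > 1`, this is integrable on `(0, 1]`. All the terms are nonnegative, so they
are dominated by themselves and the sum may be exchanged with the integral, giving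
`(m - r) + r a / (a - 1) = (m - r) + (m + r) = 2m`.
-/

open Finset

/-- The limiting degree distribution of the preferential attachment model `PA_n^{(m,δ)}`:
for `k = m + ℓ`,
`p_k = ∫₀¹ (Γ(m+δ+ℓ)/(ℓ! Γ(m+δ))) · u^{(m+δ)/a} · (1 − u^{1/a})^ℓ du` with `a = 2 + δ/m`,
and `p_k = 0` for `k < m`. -/
noncomputable def pamLimit (m : ℕ) (δ : ℝ) (k : ℕ) : ℝ :=
  if m ≤ k then
    ∫ u in (0 : ℝ)..1,
      (Real.Gamma ((m : ℝ) + δ + ((k - m : ℕ) : ℝ)) /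
          (((k - m).factorial : ℝ) * Real.Gamma ((m : ℝ) + δ))) *
        u ^ (((m : ℝ) + δ) / (2 + δ / (m : ℝ))) *
        (1 - u ^ (1 / (2 + δ / (m : ℝ)))) ^ (k - m)
  else 0

/-- The coefficient `Γ(r + ℓ) / (ℓ! Γ(r))` of the negative binomial distribution with
parameter `r`. -/
noncomputable def negBinCoeff (r : ℝ) (l : ℕ) : ℝ :=
  Real.Gamma (r + l) / ((l.factorial : ℝ) * Real.Gamma r)

lemma negBinCoeff_nonneg {r : ℝ} (hr : 0 < r) (l : ℕ) : 0 ≤ negBinCoeff r l := by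
  have h1 := Real.Gamma_pos_of_pos hr
  have h2 : 0 < Real.Gamma (r + l) := Real.Gamma_pos_of_pos (by positivity)
  unfold negBinCoeff
  positivity

lemma Gamma_add_nat_eq {r : ℝ} (hr : 0 < r) (l : ℕ) :
    Real.Gamma (r + l) = (ascPochhammer ℝ l).eval r * Real.Gamma r := by
  induction l with
  | zero => simp
  | succ n ih =>
    have h : r + n ≠ 0 := by positivity
    rw [ascPochhammer_succ_eval, Nat.cast_succ, ← add_assoc, Real.Gamma_add_one h, ih]
    ring

/-- This identifies the Gamma quotient with the coefficient of Mathlib's binomial series. -/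
lemma negBinCoeff_eq_multichoose {r : ℝ} (hr : 0 < r) (l : ℕ) :
    negBinCoeff r l = Ring.multichoose r l := by
  have h := Ring.factorial_nsmul_multichoose_eq_ascPochhammer r l
  rw [Polynomial.ascPochhammer_smeval_eq_eval, nsmul_eq_mul] at h
  have h1 := (Real.Gamma_pos_of_pos hr).ne'
  have h2 : (l.factorial : ℝ) ≠ 0 := by positivity
  unfold negBinCoeff
  rw [Gamma_add_nat_eq hr, ← h]
  field_simp

lemma hasSum_negBinCoeff {r : ℝ} (hr : 0 < r) {x : ℝ} (hx0 : 0 ≤ x) (hx1 : x < 1) :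
    HasSum (fun l : ℕ => negBinCoeff r l * x ^ l) (1 / (1 - x) ^ r) := by
  have hx : x ∈ Metric.eball (0 : ℝ) 1 := by
    rw [Metric.mem_eball, edist_dist, dist_zero_right, Real.norm_of_nonneg hx0]
    simpa using hx1
  have h := (Real.one_div_one_sub_rpow_hasFPowerSeriesOnBall_zero r).hasSum hx
  simp only [zero_add] at h
  refine (congrArg (fun f => HasSum f _) (funext fun l => ?_)).mpr h
  rw [negBinCoeff_eq_multichoose hr, Ring.multichoose_eq]
  simp [mul_comm]

/-- The absorption identity `(ℓ + 1) c(r, ℓ + 1) = r c(r + 1, ℓ)`, which reduces the first moment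
to the total mass of the distribution with parameter `r + 1`. -/
lemma succ_mul_negBinCoeff_succ {r : ℝ} (hr : 0 < r) (l : ℕ) :
    ((l + 1 : ℕ) : ℝ) * negBinCoeff r (l + 1) = r * negBinCoeff (r + 1) l := by
  have h1 := (Real.Gamma_pos_of_pos hr).ne'
  have h2 : (l.factorial : ℝ) ≠ 0 := by positivity
  have h3 : (l : ℝ) + 1 ≠ 0 := by positivity
  unfold negBinCoeff
  rw [Real.Gamma_add_one hr.ne', Nat.factorial_succ,
    show r + ((l + 1 : ℕ) : ℝ) = r + 1 + l by push_cast; ring]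
  push_cast
  field_simp

lemma hasSum_mul_negBinCoeff {r : ℝ} (hr : 0 < r) {x : ℝ} (hx0 : 0 ≤ x) (hx1 : x < 1) :
    HasSum (fun l : ℕ => (l : ℝ) * negBinCoeff r l * x ^ l) (r * x / (1 - x) ^ (r + 1)) := by
  have h := (hasSum_negBinCoeff (r := r + 1) (by positivity) hx0 hx1).mul_left (r * x)
  rw [← hasSum_nat_add_iff' 1]
  have hval : r * x * (1 / (1 - x) ^ (r + 1)) = r * x / (1 - x) ^ (r + 1) -
      ∑ i ∈ range 1, (i : ℝ) * negBinCoeff r i * x ^ i := by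
    simp [div_eq_mul_inv]
  rw [← hval]
  refine (congrArg (fun f => HasSum f _) (funext fun l => ?_)).mpr h
  rw [succ_mul_negBinCoeff_succ hr]
  ring

/-- The mean of the negative binomial distribution with parameters `r` and `p`, shifted by `m`. -/
lemma hasSum_negBin_mean {r : ℝ} (hr : 0 < r) (m : ℝ) {p : ℝ} (hp0 : 0 < p) (hp1 : p ≤ 1) :
    HasSum (fun l : ℕ => (m + l) * (negBinCoeff r l * p ^ r * (1 - p) ^ l))
      ((m - r) + r * p⁻¹) := by
  have h1 := (hasSum_negBinCoeff hr (sub_nonneg.2 hp1) (by linarith)).mul_left (m * p ^ r)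
  have h2 := (hasSum_mul_negBinCoeff hr (sub_nonneg.2 hp1) (by linarith)).mul_left (p ^ r)
  have hval : (m - r) + r * p⁻¹ = m * p ^ r * (1 / (1 - (1 - p)) ^ r) +
      p ^ r * (r * (1 - p) / (1 - (1 - p)) ^ (r + 1)) := by
    have hpr : p ^ r ≠ 0 := (Real.rpow_pos_of_pos hp0 r).ne'
    rw [sub_sub_cancel, Real.rpow_add_one hp0.ne']
    field_simp
    ring
  rw [hval]
  refine (congrArg (fun f => HasSum f _) (funext fun l => ?_)).mpr (h1.add h2)
  ring

/-- The limiting degree distribution of `PA_n^{(m,δ)}` has mean `2m`: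
`Σ_{k=m}^∞ k·p_k = 2m`. -/
theorem pamLimit_mean (m : ℕ) (hm : 0 < m) (δ : ℝ) (hδ₁ : -(m : ℝ) < δ) (hδ₂ : δ < m) :
    ∑' k : ℕ, (k : ℝ) * pamLimit m δ k = 2 * m := by
  have hm' : (0 : ℝ) < m := by exact_mod_cast hm
  obtain ⟨r, hr⟩ : ∃ r : ℝ, r = m + δ := ⟨_, rfl⟩
  obtain ⟨a, ha⟩ : ∃ a : ℝ, a = 2 + δ / m := ⟨_, rfl⟩
  have hr0 : 0 < r := by linarith
  have ham : a - 1 = r / m := by rw [ha, hr]; field_simp; ring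
  have ha1 : 1 < a := by
    have : 0 < r / m := by positivity
    linarith
  have ha0 : 0 < a := by linarith
  -- Integrability of `u ^ (-1 / a)` at `0` is where `a > 1` enters.
  have hexp : -1 < -(1 / a) := by
    rw [neg_lt_neg_iff, div_lt_one ha0]
    exact ha1
  have hint : IntervalIntegrable (fun u : ℝ => (m - r) + r * u ^ (-(1 / a)))
      MeasureTheory.volume 0 1 :=
    intervalIntegrable_const.add ((intervalIntegral.intervalIntegrable_rpow' hexp).const_mul r)
  let F : ℕ → ℝ → ℝ := fun l u =>
    (m + l) * (negBinCoeff r l * u ^ (r / a) * (1 - u ^ (1 / a)) ^ l)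
  have hF_sum : ∀ u ∈ Set.uIoc (0 : ℝ) 1,
      HasSum (fun l => F l u) ((m - r) + r * u ^ (-(1 / a))) := by
    intro u hu
    rw [Set.uIoc_of_le zero_le_one] at hu
    have h := hasSum_negBin_mean hr0 m (Real.rpow_pos_of_pos hu.1 (1 / a))
      (Real.rpow_le_one hu.1.le hu.2 (by positivity))
    rwa [← Real.rpow_mul hu.1.le, ← Real.rpow_neg hu.1.le, one_div_mul_eq_div] at h
  have hF_nonneg : ∀ l, ∀ u ∈ Set.uIoc (0 : ℝ) 1, 0 ≤ F l u := by
    intro l u hu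
    rw [Set.uIoc_of_le zero_le_one] at hu
    have h1 := negBinCoeff_nonneg hr0 l
    have h2 : 0 ≤ 1 - u ^ (1 / a) :=
      sub_nonneg.2 (Real.rpow_le_one hu.1.le hu.2 (by positivity))
    have h3 := Real.rpow_nonneg hu.1.le (r / a)
    positivity
  -- The terms are nonnegative, so `F` serves as its own dominating family.
  have hsum := intervalIntegral.hasSum_integral_of_dominated_convergence (μ := MeasureTheory.volume)
    (a := 0) (b := 1) (F := F) (f := fun u : ℝ => (m - r) + r * u ^ (-(1 / a))) F
    (fun l => (by fun_prop : Measurable (F l)).aestronglyMeasurable)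
    (fun l => .of_forall fun u hu => (Real.norm_of_nonneg (hF_nonneg l u hu)).le)
    (.of_forall fun u hu => (hF_sum u hu).summable)
    (hint.congr fun u hu => (hF_sum u hu).tsum_eq.symm)
    (.of_forall hF_sum)
  have hval : ∫ u in (0 : ℝ)..1, ((m - r) + r * u ^ (-(1 / a))) = 2 * m := by
    rw [intervalIntegral.integral_add intervalIntegrable_const
      ((intervalIntegral.intervalIntegrable_rpow' hexp).const_mul r),
      intervalIntegral.integral_const_mul, integral_rpow (Or.inl hexp),
      Real.one_rpow, Real.zero_rpow (by linarith)]
    have haeq : a = (r + m) / m := by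
      rw [eq_div_iff hm'.ne']
      rw [eq_div_iff hm'.ne'] at ham
      linarith
    have h1 : -(1 / a) + 1 = r / (r + m) := by
      rw [haeq]
      field_simp
      ring
    rw [h1]
    simp
    field_simp
    ring
  rw [hval] at hsum
  have hterm : ∀ l : ℕ, ((l + m : ℕ) : ℝ) * pamLimit m δ (l + m) = ∫ u in (0 : ℝ)..1, F l u := by
    intro l
    rw [pamLimit, if_pos (Nat.le_add_left m l), Nat.add_sub_cancel, ← hr, ← ha,
      ← intervalIntegral.integral_const_mul]
    simp only [F, negBinCoeff, Nat.cast_add, add_comm (l : ℝ) (m : ℝ)]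
  have hzero : ∑ k ∈ range m, (k : ℝ) * pamLimit m δ k = 0 :=
    sum_eq_zero fun k hk => by
      rw [pamLimit, if_neg (not_le.2 (mem_range.1 hk)), mul_zero]
  refine HasSum.tsum_eq ((hasSum_nat_add_iff' m).1 ?_)
  rw [hzero, sub_zero]
  simpa only [hterm] using hsum
end
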